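/- For every n ≥ 1, the immersion poset on partitions of n contains a chain of length ⌊n/2⌋; that is, there exist partitions μ_0, μ_1, …, μ_{⌊n/2⌋} of n with μ_0 <_I μ_1 <_I ⋯ <_I μ_{⌊n/2⌋}. In particular, the rank of the immersion poset (P(n), ≤_I) is at least ⌊n/2⌋. -/

import Mathlib

open Finset MvPolynomial

/-- A partition of `n`, represented as a weakly decreasing list of positive
integers summing to `n`. -/
def IsPartitionOf (n : ℕ) (l : List ℕ) : Prop :=
  l.Pairwise (· ≥ ·) ∧ (∀ x ∈ l, 0 < x) ∧ l.sum = n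

/-- `T : ℕ → ℕ → ℕ` is a semistandard Young tableau of shape `l`
(rows weakly increase, columns strictly increase, entries are `0` outside
of the diagram; entries are 0-indexed, so entry value `k` stands for the
letter `k+1`). -/
def IsSSYT (l : List ℕ) (T : ℕ → ℕ → ℕ) : Prop :=
  (∀ i j1 j2, j1 ≤ j2 → j2 < l.getD i 0 → T i j1 ≤ T i j2) ∧
  (∀ i1 i2 j, i1 < i2 → j < l.getD i2 0 → T i1 j < T i2 j) ∧
  (∀ i j, l.getD i 0 ≤ j → T i j = 0)

/-- The tableau `T` of shape `l` has content `ν`: for every `k`, the number of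
cells of the diagram of `l` whose entry is `k` equals the `(k+1)`-st part of `ν`. -/
def HasContent (l : List ℕ) (T : ℕ → ℕ → ℕ) (ν : List ℕ) : Prop :=
  ∀ k, Nat.card {c : ℕ × ℕ // c.2 < l.getD c.1 0 ∧ T c.1 c.2 = k} = ν.getD k 0

/-- The Kostka number `K_{l,ν}`: the number of semistandard Young tableaux of
shape `l` and content `ν`. -/
noncomputable def kostka (l ν : List ℕ) : ℕ :=
  Nat.card {T : ℕ → ℕ → ℕ // IsSSYT l T ∧ HasContent l T ν}

/-- `f^λ`, the number of standard Young tableaux of shape `l`. -/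
noncomputable def fSYT (l : List ℕ) : ℕ := kostka l (List.replicate l.sum 1)

/-- Dominance order: all partial sums of `l` are at most those of `m`. -/
def DomLE (l m : List ℕ) : Prop := ∀ k, (l.take k).sum ≤ (m.take k).sum

/-- The standard immersion order: dominance together with `f^λ ≤ f^μ`. -/
def StdLE (l m : List ℕ) : Prop := DomLE l m ∧ fSYT l ≤ fSYT m

/-- Strict standard immersion order. -/
def StdLT (l m : List ℕ) : Prop := StdLE l m ∧ l ≠ m

/-- `m` covers `l` in the standard immersion poset on partitions of `n`. -/
def StdCovBy (n : ℕ) (l m : List ℕ) : Prop :=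
  StdLT l m ∧ ∀ ν, IsPartitionOf n ν → StdLT l ν → ¬ StdLT ν m

/-- `l` is a maximal element of the standard immersion poset on partitions of `n`. -/
def StdMaximal (n : ℕ) (l : List ℕ) : Prop :=
  ∀ m, IsPartitionOf n m → m ≠ l → ¬ StdLE l m

/-- The immersion order on partitions of `n`: `l ≤_I m` iff
`K_{l,α} ≤ K_{m,α}` for every partition `α` of `n`. -/
def ImmersionLE (n : ℕ) (l m : List ℕ) : Prop :=
  ∀ ν, IsPartitionOf n ν → kostka l ν ≤ kostka m ν

/-- Strict immersion order. -/
def ImmersionLT (n : ℕ) (l m : List ℕ) : Prop := ImmersionLE n l m ∧ l ≠ m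

/-- `m` covers `l` in the immersion poset on partitions of `n`. -/
def ImmersionCovBy (n : ℕ) (l m : List ℕ) : Prop :=
  ImmersionLT n l m ∧ ∀ ν, IsPartitionOf n ν → ImmersionLT n l ν → ¬ ImmersionLT n ν m

lemma hook_getD_zero (a b : ℕ) : (a :: List.replicate b 1).getD 0 0 = a := rfl

lemma hook_getD_succ (a b i : ℕ) :
    (a :: List.replicate b 1).getD (i + 1) 0 = if i < b then 1 else 0 := by
  rw [List.getD_cons_succ]
  by_cases h : i < b
  · simp [List.getD_eq_getElem?_getD, h]
  · simp [List.getD_eq_getElem?_getD, h]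

/-- The first row of a hook tableau. -/
def rowL (a : ℕ) (T : ℕ → ℕ → ℕ) : List ℕ := (List.range a).map (T 0)

/-- The leg of a hook tableau. -/
def colL (b : ℕ) (T : ℕ → ℕ → ℕ) : List ℕ := (List.range b).map (fun i => T (i + 1) 0)

lemma card_map_count (a k : ℕ) (f : ℕ → ℕ) :
    ((List.range a).map f).count k = ((Finset.range a).filter (fun j => f j = k)).card := by
  rw [← Multiset.coe_count, ← Multiset.map_coe, Multiset.count_map, Finset.card_def]
  simp only [Finset.filter_val, Finset.range_val, eq_comm]
  rfl

lemma hook_cells (a b k : ℕ) (T : ℕ → ℕ → ℕ) :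
    Nat.card {c : ℕ × ℕ // c.2 < (a :: List.replicate b 1).getD c.1 0 ∧ T c.1 c.2 = k}
      = (rowL a T).count k + (colL b T).count k := by
  rw [rowL, colL, card_map_count, card_map_count]
  rw [← Finset.card_disjSum, ← Nat.card_eq_finsetCard]
  symm
  refine Nat.card_eq_of_bijective (fun x => match x with
    | ⟨Sum.inl j, h⟩ => ⟨(0, j), by
        simp at h; rw [hook_getD_zero]; exact h⟩
    | ⟨Sum.inr i, h⟩ => ⟨(i + 1, 0), by
        simp at h; rw [hook_getD_succ]; simp [h]⟩) ⟨?_, ?_⟩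
  · rintro ⟨x | x, hx⟩ ⟨y | y, hy⟩ h <;> simp at h <;> simp [h]
  · rintro ⟨⟨i, j⟩, h⟩
    rcases i with _ | i
    · refine ⟨⟨Sum.inl j, ?_⟩, rfl⟩
      rw [hook_getD_zero] at h
      simpa using h
    · rw [hook_getD_succ] at h
      have hi : i < b := by
        by_contra hc
        simp [hc] at h
      simp only [hi, if_true] at h
      obtain ⟨h1, h2⟩ := h
      have : j = 0 := by omega
      subst this
      exact ⟨⟨Sum.inr i, by simpa using ⟨hi, h2⟩⟩, rfl⟩

/-- The multiset of letters of content `ν`. -/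
def contM (ν : List ℕ) : Multiset ℕ :=
  ∑ k ∈ Finset.range ν.length, Multiset.replicate (ν.getD k 0) k

lemma count_contM (ν : List ℕ) (k : ℕ) : (contM ν).count k = ν.getD k 0 := by
  rw [contM, Multiset.count_sum']
  simp only [Multiset.count_replicate]
  rw [Finset.sum_ite_eq']
  by_cases h : k < ν.length
  · simp [h]
  · simp [h]

lemma card_contM (ν : List ℕ) : Multiset.card (contM ν) = ν.sum := by
  rw [contM, Multiset.card_sum]
  simp only [Multiset.card_replicate]
  rw [Finset.sum_range, ← Fin.sum_univ_getElem]
  simp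

lemma hook_content (a b : ℕ) (T : ℕ → ℕ → ℕ) (ν : List ℕ) :
    HasContent (a :: List.replicate b 1) T ν ↔
      (rowL a T : Multiset ℕ) + (colL b T : Multiset ℕ) = contM ν := by
  unfold HasContent
  simp only [hook_cells]
  rw [Multiset.ext]
  simp [count_contM]

lemma hook_ssyt (a b : ℕ) (ha : 1 ≤ a) (T : ℕ → ℕ → ℕ) :
    IsSSYT (a :: List.replicate b 1) T ↔
      (rowL a T).Pairwise (· ≤ ·) ∧ (colL b T).Pairwise (· < ·) ∧
      (∀ x ∈ colL b T, T 0 0 < x) ∧ (∀ j, a ≤ j → T 0 j = 0) ∧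
      (∀ i, b ≤ i → T (i + 1) 0 = 0) ∧ (∀ i j, T (i + 1) (j + 1) = 0) := by
  constructor
  · rintro ⟨h1, h2, h3⟩
    refine ⟨?_, ?_, ?_, ?_, ?_, ?_⟩
    · rw [rowL, List.pairwise_map]
      refine List.Pairwise.imp_of_mem ?_ List.pairwise_lt_range
      intro x y hx hy hxy
      exact h1 0 x y hxy.le (by rw [hook_getD_zero]; simpa using hy)
    · rw [colL, List.pairwise_map]
      refine List.Pairwise.imp_of_mem ?_ List.pairwise_lt_range
      intro x y hx hy hxy
      have hy' : y < b := by simpa using hy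
      exact h2 (x + 1) (y + 1) 0 (by omega) (by rw [hook_getD_succ]; simp [hy'])
    · intro x hx
      simp only [colL, List.mem_map, List.mem_range] at hx
      obtain ⟨i, hi, rfl⟩ := hx
      exact h2 0 (i + 1) 0 (by omega) (by rw [hook_getD_succ]; simp [hi])
    · intro j hj
      exact h3 0 j (by rw [hook_getD_zero]; exact hj)
    · intro i hi
      exact h3 (i + 1) 0 (by rw [hook_getD_succ]; simp [hi])
    · intro i j
      exact h3 (i + 1) (j + 1) (by rw [hook_getD_succ]; split_ifs <;> omega)
  · rintro ⟨h1, h2, h3, h4, h5, h6⟩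
    refine ⟨?_, ?_, ?_⟩
    · intro i j1 j2 hj hl
      rcases i with _ | i
      · rw [hook_getD_zero] at hl
        rcases hj.eq_or_lt with rfl | hj
        · exact le_rfl
        · have := List.pairwise_iff_getElem.1 h1 j1 j2 (by simp [rowL]; omega)
            (by simp [rowL]; omega) hj
          simpa [rowL] using this
      · rw [hook_getD_succ] at hl
        have : j2 = 0 := by split_ifs at hl <;> omega
        have : j1 = j2 := by omega
        rw [this]
    · intro i1 i2 j hi hl
      rcases i2 with _ | i2
      · omega
      · rw [hook_getD_succ] at hl
        have hb : i2 < b := by by_contra hc; simp [hc] at hl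
        have : j = 0 := by split_ifs at hl <;> omega
        subst this
        rcases i1 with _ | i1
        · apply h3
          simp only [colL, List.mem_map, List.mem_range]
          exact ⟨i2, hb, rfl⟩
        · have := List.pairwise_iff_getElem.1 h2 i1 i2 (by simp [colL]; omega)
            (by simp [colL]; omega) (by omega)
          simpa [colL] using this
    · intro i j hl
      rcases i with _ | i
      · exact h4 j (by simpa [hook_getD_zero] using hl)
      · rcases j with _ | j
        · apply h5
          rw [hook_getD_succ] at hl
          by_contra hc
          rw [if_pos (by omega)] at hl
          omega
        · exact h6 i j

lemma map_getD_range (L : List ℕ) (m : ℕ) (h : L.length = m) :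
    (List.range m).map (fun j => L.getD j 0) = L := by
  subst h
  apply List.ext_getElem
  · simp
  · intro i h1 h2
    simp at h1
    simp [h1]

lemma eq_of_map_range {m : ℕ} {f g : ℕ → ℕ}
    (h : (List.range m).map f = (List.range m).map g) {i : ℕ} (hi : i < m) : f i = g i :=
  List.map_inj_left.1 h i (by simpa using hi)

lemma kostka_hook (a b : ℕ) (ha : 1 ≤ a) (ν : List ℕ) (hν : IsPartitionOf (a + b) ν) :
    kostka (a :: List.replicate b 1) ν = (ν.length - 1).choose b := by
  obtain ⟨-, hpos, hsum⟩ := hν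
  have hposk : ∀ k, k < ν.length → 0 < ν.getD k 0 := by
    intro k hk
    rw [List.getD_eq_getElem _ _ hk]
    exact hpos _ (List.getElem_mem hk)
  have hlen : 0 < ν.length := by
    rcases ν with _ | ⟨x, t⟩
    · simp at hsum; omega
    · simp
  have hcard : (ν.length - 1).choose b
      = (Finset.powersetCard b (Finset.Ico 1 ν.length)).card := by
    rw [Finset.card_powersetCard, Nat.card_Ico]
  rw [hcard, kostka, ← Nat.card_eq_finsetCard]
  refine Nat.card_eq_of_bijective (fun T => ⟨(colL b T.1).toFinset, ?_⟩) ⟨?_, ?_⟩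
  · obtain ⟨T, hT, hc⟩ := T
    rw [hook_content] at hc
    rw [hook_ssyt a b ha] at hT
    obtain ⟨h1, h2, h3, -⟩ := hT
    rw [Finset.mem_powersetCard]
    refine ⟨?_, ?_⟩
    · intro x hx
      rw [List.mem_toFinset] at hx
      have h0 := h3 x hx
      have hm : x ∈ contM ν := by rw [← hc]; simp [hx]
      rw [← Multiset.count_pos, count_contM] at hm
      rw [Finset.mem_Ico]
      refine ⟨by omega, ?_⟩
      by_contra hcon
      rw [List.getD_eq_default _ _ (by omega)] at hm
      omega
    · rw [List.toFinset_card_of_nodup (h2.imp (fun h => h.ne))]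
      simp [colL]
  · rintro ⟨T, hT, hc⟩ ⟨U, hU, hd⟩ h
    simp only [Subtype.mk.injEq] at h
    rw [hook_content] at hc hd
    rw [hook_ssyt a b ha] at hT hU
    obtain ⟨h1, h2, h3, h4, h5, h6⟩ := hT
    obtain ⟨g1, g2, g3, g4, g5, g6⟩ := hU
    have hperm : (colL b T).Perm (colL b U) :=
      List.perm_of_nodup_nodup_toFinset_eq (h2.imp (fun h => h.ne)) (g2.imp (fun h => h.ne)) h
    have hcol : colL b T = colL b U :=
      hperm.eq_of_pairwise (fun x y _ _ hx hy => absurd hx hy.asymm) h2 g2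
    have hrowm : (rowL a T : Multiset ℕ) = (rowL a U : Multiset ℕ) := by
      rw [← hd, hcol] at hc
      exact add_right_cancel hc
    have hrow : rowL a T = rowL a U :=
      (Multiset.coe_eq_coe.1 hrowm).eq_of_pairwise (fun x y _ _ hx hy => le_antisymm hx hy) h1 g1
    rw [Subtype.mk.injEq]
    funext i j
    rcases i with _ | i
    · by_cases hj : j < a
      · exact eq_of_map_range hrow hj
      · rw [h4 j (by omega), g4 j (by omega)]
    · rcases j with _ | j
      · by_cases hi : i < b
        · exact eq_of_map_range hcol hi
        · rw [h5 i (by omega), g5 i (by omega)]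
      · rw [h6, g6]
  · rintro ⟨S, hS⟩
    rw [Finset.mem_powersetCard] at hS
    obtain ⟨hS1, hS2⟩ := hS
    have hle : S.val ≤ contM ν := by
      rw [Multiset.le_iff_count]
      intro k
      rw [count_contM]
      by_cases hk : k ∈ S
      · have := hS1 hk
        rw [Finset.mem_Ico] at this
        have := hposk k this.2
        have := Multiset.nodup_iff_count_le_one.1 S.nodup k
        omega
      · rw [Multiset.count_eq_zero_of_notMem (by simpa using hk)]
        omega
    obtain ⟨R, hR⟩ : ∃ R : List ℕ, R = (contM ν - S.val).sort (· ≤ ·) := ⟨_, rfl⟩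
    obtain ⟨C, hC⟩ : ∃ C : List ℕ, C = S.sort (· ≤ ·) := ⟨_, rfl⟩
    have hRm : (R : Multiset ℕ) = contM ν - S.val := by rw [hR, Multiset.sort_eq]
    have hCm : (C : Multiset ℕ) = S.val := by rw [hC, Finset.sort_eq]
    have hClen : C.length = b := by rw [hC, Finset.length_sort, hS2]
    have hRlen : R.length = a := by
      rw [← Multiset.coe_card, hRm, Multiset.card_sub hle, card_contM, hsum]
      change a + b - S.card = a
      omega
    have hRs : R.Pairwise (· ≤ ·) := by rw [hR]; exact Multiset.pairwise_sort _ _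
    have hCs : C.Pairwise (· < ·) := by rw [hC]; exact Finset.sortedLT_sort S |>.pairwise
    have h0R : 0 ∈ R := by
      rw [← Multiset.mem_coe, hRm, ← Multiset.count_pos, Multiset.count_sub, count_contM]
      have h0S : 0 ∉ S := by
        intro h
        have := hS1 h
        simp at this
      rw [Multiset.count_eq_zero_of_notMem (by simpa using h0S)]
      have := hposk 0 hlen
      omega
    have hR0 : R.getD 0 0 = 0 := by
      rcases R with _ | ⟨x, t⟩
      · rfl
      · rw [List.getD_cons_zero]
        rw [List.pairwise_cons] at hRs
        rcases List.mem_cons.1 h0R with h | h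
        · exact h.symm
        · exact Nat.le_zero.1 (hRs.1 0 h)
    let T : ℕ → ℕ → ℕ := fun i j => match i, j with
      | 0, j => R.getD j 0
      | i + 1, 0 => C.getD i 0
      | _ + 1, _ + 1 => 0
    have hrow : rowL a T = R := map_getD_range R a hRlen
    have hcol : colL b T = C := map_getD_range C b hClen
    refine ⟨⟨T, ?_, ?_⟩, ?_⟩
    · rw [hook_ssyt a b ha, hrow, hcol]
      refine ⟨hRs, hCs, ?_, ?_, ?_, ?_⟩
      · intro x hx
        change R.getD 0 0 < x
        rw [hR0]
        have : x ∈ S := by rw [← Finset.mem_val, ← hCm]; simpa using hx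
        have := hS1 this
        rw [Finset.mem_Ico] at this
        omega
      · intro j hj
        exact List.getD_eq_default _ _ (by omega)
      · intro i hi
        exact List.getD_eq_default _ _ (by omega)
      · intro i j
        rfl
    · rw [hook_content, hrow, hcol, hRm, hCm]
      exact tsub_add_cancel_of_le hle
    · simp only [Subtype.mk.injEq]
      rw [hcol, hC, Finset.sort_toFinset]

lemma length_le_of_partition {n : ℕ} {ν : List ℕ} (h : IsPartitionOf n ν) : ν.length ≤ n := by
  have := List.card_nsmul_le_sum ν 1 (fun x hx => h.2.1 x hx)
  rw [h.2.2] at this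
  simpa using this

lemma choose_hook_le (m c : ℕ) (h : m ≤ 2 * c + 1) : m.choose (c + 1) ≤ m.choose c := by
  have h1 := Nat.choose_succ_right_eq m c
  have h2 : m.choose c * (m - c) ≤ m.choose c * (c + 1) := Nat.mul_le_mul_left _ (by omega)
  rw [← h1] at h2
  exact Nat.le_of_mul_le_mul_right h2 (by omega)

/-- For every `n ≥ 1` the immersion poset on partitions of `n`
contains a chain of length `⌊n/2⌋`; in particular its rank is at least `⌊n/2⌋`. -/
theorem immersion_poset_chain (n : ℕ) (hn : 1 ≤ n) :
    ∃ μ : ℕ → List ℕ, (∀ j, j ≤ n / 2 → IsPartitionOf n (μ j)) ∧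
      ∀ j, j < n / 2 → ImmersionLT n (μ j) (μ (j + 1)) := by
  refine ⟨fun j => (j + 1) :: List.replicate (n - 1 - j) 1, ?_, ?_⟩
  · intro j hj
    refine ⟨?_, ?_, ?_⟩
    · rw [List.pairwise_cons]
      refine ⟨?_, ?_⟩
      · intro x hx
        have := List.eq_of_mem_replicate hx
        omega
      · rw [List.pairwise_replicate]
        right
        exact le_rfl
    · intro x hx
      rcases List.mem_cons.1 hx with h | h
      · omega
      · have := List.eq_of_mem_replicate h
        omega
    · rw [List.sum_cons, List.sum_replicate, smul_eq_mul]
      omega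
  · intro j hj
    refine ⟨?_, ?_⟩
    · intro ν hν
      have hl := length_le_of_partition hν
      rw [kostka_hook (j + 1) (n - 1 - j) (by omega) ν
          (by rwa [show j + 1 + (n - 1 - j) = n by omega]),
        kostka_hook (j + 1 + 1) (n - 1 - (j + 1)) (by omega) ν
          (by rwa [show j + 1 + 1 + (n - 1 - (j + 1)) = n by omega]),
        show n - 1 - j = n - 1 - (j + 1) + 1 by omega]
      exact choose_hook_le _ _ (by omega)
    · intro h
      have := (List.cons.inj h).1
      omega
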